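/- arXiv:1812.06347 — 2 statements merged into one kernel-verified Lean document; each statement's English description precedes it below -/
import Mathlib

section
/- Define f : ℕ → ℕ by f(1) = 1 and f(n) = C(n, ⌊n/2⌋)·(f(⌊n/2⌋) + f(⌈n/2⌉)) for n > 1. Then for all n ≥ 1, 0.195 · 4^n · n^{−(lg n)/4} · n^{5/4 − (lg π)/2} ≤ f(n) ≤ (1/4) · 4^n · n^{−(lg n)/4} · n^{lg 5 − 3/4 − (lg π)/2}, where lg = log₂. -/
def f : ℕ → ℕ
  | 0 => 1
  | 1 => 1
  | n + 2 => Nat.choose (n + 2) ((n + 2) / 2) * (f ((n + 2) / 2) + f ((n + 2 + 1) / 2))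
decreasing_by all_goals omega

/-!
Write the recurrence through central binomial coefficients:
`f (2m) = C(2m, m) · 2 f m` and `2 f (2m+1) = C(2m+2, m+1) · (f m + f (m+1))`. A subsolution of
these relations stays below a supersolution once it does so initially.

The profile `g x = x ^ (-(lg x)/4 + c)` satisfies `g (2x) = 2 ^ (c - 1/4) / √x · g x`, which matches
`C(2m, m) ≈ 4 ^ m / √(π m)`. For the upper bound, `4 ^ n · g n` is a supersolution as soon as
`2 ^ (c - 1/4) √π = 5/2`: in the odd case the weights `1` and `4` of `f m` and `f (m+1)` sum to `5`,
and `g m + 4 g (m+1) ≤ 5 g (m + 1/2)` up to a favourable square root. For the lower bound,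
`2 ^ (c - 1/4) √π = 2` makes the even case exact except for the defect `exp (-1/(8m))` of the
central binomial coefficient; since `1/(4m) - 1/(8m) = 1/(4 · 2m)`, the factor `exp (1/(4n))`
absorbs this defect along all doublings.
-/

open Real Filter Topology

/-! ### Comparison principle -/

/-- Sequences that satisfy, with `≤`, the even- and odd-index relations of `f` from index `m₀` on.
The odd relation is doubled, which turns `C(2m+1, m)` into a central binomial coefficient. -/
def IsSubsolution (u : ℕ → ℝ) (m₀ : ℕ) : Prop :=
  ∀ m ≥ m₀, u (2 * m) ≤ m.centralBinom * (2 * u m) ∧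
    2 * u (2 * m + 1) ≤ (m + 1).centralBinom * (u m + u (m + 1))

/-- Sequences that satisfy, with `≥`, the even- and odd-index relations of `f` from index `m₀` on;
the counterpart of `IsSubsolution`. -/
def IsSupersolution (u : ℕ → ℝ) (m₀ : ℕ) : Prop :=
  ∀ m ≥ m₀, m.centralBinom * (2 * u m) ≤ u (2 * m) ∧
    (m + 1).centralBinom * (u m + u (m + 1)) ≤ 2 * u (2 * m + 1)

theorem IsSubsolution.le_of_isSupersolution {u v : ℕ → ℝ} {m₀ : ℕ} (h₀ : m₀ ≠ 0)
    (hu : IsSubsolution u m₀) (hv : IsSupersolution v m₀)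
    (base : ∀ n, m₀ ≤ n → n < 2 * m₀ → u n ≤ v n) {n : ℕ}
    (hn : m₀ ≤ n) : u n ≤ v n := by
  induction n using Nat.strong_induction_on with
  | _ n ih =>
  rcases lt_or_ge n (2 * m₀) with hlt | hge
  · exact base n hn hlt
  rcases n.even_or_odd' with ⟨m, rfl | rfl⟩
  · have hm : m₀ ≤ m := by omega
    calc u (2 * m) ≤ m.centralBinom * (2 * u m) := (hu m hm).1
      _ ≤ m.centralBinom * (2 * v m) := by gcongr; exact ih m (by omega) hm
      _ ≤ v (2 * m) := (hv m hm).1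
  · have hm : m₀ ≤ m := by omega
    have key : 2 * u (2 * m + 1) ≤ 2 * v (2 * m + 1) :=
      calc 2 * u (2 * m + 1) ≤ (m + 1).centralBinom * (u m + u (m + 1)) := (hu m hm).2
        _ ≤ (m + 1).centralBinom * (v m + v (m + 1)) := by
          gcongr
          · exact ih m (by omega) hm
          · exact ih (m + 1) (by omega) (by omega)
        _ ≤ 2 * v (2 * m + 1) := (hv m hm).2
    linarith

theorem IsSubsolution.const_mul {u : ℕ → ℝ} {m₀ : ℕ} {K : ℝ} (hK : 0 ≤ K)
    (hu : IsSubsolution u m₀) : IsSubsolution (fun n ↦ K * u n) m₀ := by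
  intro m hm
  have even := mul_le_mul_of_nonneg_left (hu m hm).1 hK
  have odd := mul_le_mul_of_nonneg_left (hu m hm).2 hK
  constructor <;> linarith

theorem IsSupersolution.const_mul {u : ℕ → ℝ} {m₀ : ℕ} {K : ℝ} (hK : 0 ≤ K)
    (hu : IsSupersolution u m₀) : IsSupersolution (fun n ↦ K * u n) m₀ := by
  intro m hm
  have even := mul_le_mul_of_nonneg_left (hu m hm).1 hK
  have odd := mul_le_mul_of_nonneg_left (hu m hm).2 hK
  constructor <;> linarith

theorem f_two_mul {m : ℕ} (hm : m ≠ 0) : f (2 * m) = m.centralBinom * (2 * f m) := by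
  obtain ⟨k, rfl⟩ := Nat.exists_eq_succ_of_ne_zero hm
  rw [Nat.centralBinom, Nat.succ_eq_add_one, mul_add_one, f, show (2 * k + 2) / 2 = k + 1 by omega,
    show (2 * k + 2 + 1) / 2 = k + 1 by omega, two_mul (f _)]

theorem two_mul_f_two_mul_add_one {m : ℕ} (hm : m ≠ 0) :
    2 * f (2 * m + 1) = (m + 1).centralBinom * (f m + f (m + 1)) := by
  obtain ⟨k, rfl⟩ := Nat.exists_eq_succ_of_ne_zero hm
  have pascal : (k + 1 + 1).centralBinom = 2 * (2 * k + 3).choose (k + 1) := by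
    rw [Nat.centralBinom, show 2 * (k + 1 + 1) = 2 * k + 3 + 1 by ring, Nat.choose_succ_succ,
      Nat.choose_symm_of_eq_add (show 2 * k + 3 = k + 1 + 1 + (k + 1) by ring), ← two_mul]
  rw [Nat.succ_eq_add_one, pascal, show 2 * (k + 1) + 1 = 2 * k + 1 + 2 by ring, f,
    show (2 * k + 1 + 2) / 2 = k + 1 by omega, show (2 * k + 1 + 2 + 1) / 2 = k + 1 + 1 by omega]
  ring

theorem isSubsolution_f {m₀ : ℕ} (h₀ : m₀ ≠ 0) : IsSubsolution (fun n ↦ f n) m₀ := by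
  intro m hm
  have hm₀ : m ≠ 0 := by omega
  beta_reduce
  exact_mod_cast And.intro (f_two_mul hm₀).le (two_mul_f_two_mul_add_one hm₀).le

theorem isSupersolution_f {m₀ : ℕ} (h₀ : m₀ ≠ 0) : IsSupersolution (fun n ↦ f n) m₀ := by
  intro m hm
  have hm₀ : m ≠ 0 := by omega
  beta_reduce
  exact_mod_cast And.intro (f_two_mul hm₀).ge (two_mul_f_two_mul_add_one hm₀).ge

/-! ### Central binomial coefficients -/

theorem wallis_mul_two_mul_add_one (m : ℕ) :
    Wallis.W m * (2 * m + 1) = (4 ^ m / m.centralBinom) ^ 2 := by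
  have factorial_eq : (m.centralBinom : ℝ) * m.factorial * m.factorial = (2 * m).factorial := by
    have h := Nat.choose_mul_factorial_mul_factorial (show m ≤ 2 * m by omega)
    rw [show 2 * m - m = m by omega] at h
    exact_mod_cast h
  have hC : (m.centralBinom : ℝ) ≠ 0 := mod_cast m.centralBinom_ne_zero
  have hm : (m.factorial : ℝ) ≠ 0 := mod_cast m.factorial_ne_zero
  have hpow : (2 : ℝ) ^ (4 * m) = (4 ^ m) ^ 2 := by
    rw [show (4 : ℝ) = 2 ^ 2 by norm_num, ← pow_mul, ← pow_mul]
    ring_nf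
  rw [Wallis.W_eq_factorial_ratio, ← factorial_eq, hpow]
  field_simp

/- `W m * (2 + 1 / m)` equals `(4 ^ m / C(2m, m)) ^ 2 / m`. It decreases to `π`, by a factor of at
most `exp (1 / (4 m (m + 1)))` per step, and these exponents telescope to `1 / (4 m)`. -/
theorem pi_le_wallis_mul {m : ℕ} (hm : m ≠ 0) : π ≤ Wallis.W m * (2 + 1 / m) := by
  calc π ≤ (2 * m + 1) / (2 * m + 2) * (π / 2) * (2 + 1 / m) := by
        have : (2 * (m : ℝ) + 1) / (2 * m + 2) * (π / 2) * (2 + 1 / m)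
            = π + π / (4 * (m * (m + 1))) := by field_simp; ring
        rw [this]
        exact le_add_of_nonneg_right (by positivity)
    _ ≤ Wallis.W m * (2 + 1 / m) := by gcongr; exact Wallis.le_W m

theorem wallis_eq_wallis_succ_mul {m : ℕ} (hm : m ≠ 0) :
    Wallis.W m * (2 + 1 / m) =
      Wallis.W (m + 1) * (2 + 1 / (m + 1)) * (1 + 1 / (4 * (m * (m + 1)))) := by
  have hm' : (m : ℝ) ≠ 0 := mod_cast hm
  rw [Wallis.W_succ]
  field_simp
  ring

theorem wallis_mul_exp_le_wallis_succ_mul_exp {m : ℕ} (hm : m ≠ 0) :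
    Wallis.W m * (2 + 1 / m) * exp (-(1 / m / 4)) ≤
      Wallis.W (m + 1) * (2 + 1 / (m + 1)) * exp (-(1 / (m + 1) / 4)) := by
  have hm' : (m : ℝ) ≠ 0 := mod_cast hm
  have hW := Wallis.W_pos (m + 1)
  calc Wallis.W m * (2 + 1 / m) * exp (-(1 / m / 4))
      = Wallis.W (m + 1) * (2 + 1 / (m + 1)) *
          ((1 / (4 * (m * (m + 1))) + 1) * exp (-(1 / m / 4))) := by
        rw [wallis_eq_wallis_succ_mul hm]
        ring
    _ ≤ Wallis.W (m + 1) * (2 + 1 / (m + 1)) *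
          (exp (1 / (4 * (m * (m + 1)))) * exp (-(1 / m / 4))) := by
        gcongr
        exact add_one_le_exp _
    _ = Wallis.W (m + 1) * (2 + 1 / (m + 1)) * exp (-(1 / (m + 1) / 4)) := by
        rw [← exp_add]
        congr 2
        field_simp
        ring

theorem wallis_mul_exp_le_pi {m : ℕ} (hm : m ≠ 0) :
    Wallis.W m * (2 + 1 / m) * exp (-(1 / m / 4)) ≤ π := by
  obtain ⟨k, rfl⟩ := Nat.exists_eq_succ_of_ne_zero hm
  let a : ℕ → ℝ := fun m ↦ Wallis.W m * (2 + 1 / m) * exp (-(1 / m / 4))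
  have mono : Monotone fun k ↦ a (k + 1) := monotone_nat_of_le_succ fun k ↦ by
    simpa only [a, Nat.cast_add_one] using wallis_mul_exp_le_wallis_succ_mul_exp k.succ_ne_zero
  have lim : Tendsto a atTop (𝓝 π) := by
    have inv := tendsto_one_div_atTop_nhds_zero_nat (𝕜 := ℝ)
    have h := (Wallis.tendsto_W_nhds_pi_div_two.mul (inv.const_add 2)).mul
      ((continuous_exp.tendsto _).comp (inv.div_const 4).neg)
    rwa [zero_div, neg_zero, exp_zero, mul_one, add_zero, div_mul_cancel₀ π two_ne_zero] at h
  exact mono.ge_of_tendsto ((tendsto_add_atTop_iff_nat 1).2 lim) k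

theorem centralBinom_le_four_pow_div_sqrt {m : ℕ} (hm : m ≠ 0) :
    m.centralBinom ≤ 4 ^ m / √(π * m) := by
  have hC : (0 : ℝ) < m.centralBinom := mod_cast m.centralBinom_pos
  rw [le_div_comm₀ hC (by positivity)]
  refine sqrt_le_iff.2 ⟨by positivity, ?_⟩
  calc π * m ≤ Wallis.W m * (2 + 1 / m) * m := by gcongr; exact pi_le_wallis_mul hm
    _ = (4 ^ m / m.centralBinom) ^ 2 := by
      rw [← wallis_mul_two_mul_add_one]
      field_simp

theorem four_pow_div_sqrt_mul_exp_le_centralBinom {m : ℕ} (hm : m ≠ 0) :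
    4 ^ m / √(π * m) * exp (-(1 / m / 8)) ≤ m.centralBinom := by
  have hC : (0 : ℝ) < m.centralBinom := mod_cast m.centralBinom_pos
  rw [div_mul_eq_mul_div, div_le_iff₀ (by positivity), ← div_le_iff₀' hC, mul_div_right_comm]
  refine le_sqrt_of_sq_le ?_
  calc (4 ^ m / m.centralBinom * exp (-(1 / m / 8))) ^ 2
      = Wallis.W m * (2 + 1 / m) * exp (-(1 / m / 4)) * m := by
        rw [mul_pow, ← wallis_mul_two_mul_add_one, ← exp_nat_mul,
          show ((2 : ℕ) : ℝ) * -(1 / m / 8) = -(1 / m / 4) by push_cast; ring]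
        field_simp
    _ ≤ π * m := by gcongr; exact wallis_mul_exp_le_pi hm

/-! ### Binary logarithms -/

theorem div_le_logb_of_pow_le_pow {b x : ℝ} {p q : ℕ} (hb : 1 < b) (hq : q ≠ 0)
    (h : b ^ p ≤ x ^ q) : (p / q : ℝ) ≤ logb b x := by
  have hlog := logb_le_logb_of_le hb (by positivity) h
  rw [logb_pow, logb_pow, logb_self_eq_one hb, mul_one] at hlog
  exact (div_le_iff₀' (by positivity)).2 hlog

theorem logb_le_div_of_pow_le_pow {b x : ℝ} {p q : ℕ} (hb : 1 < b) (hx : 0 < x) (hq : q ≠ 0)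
    (h : x ^ q ≤ b ^ p) : logb b x ≤ (p / q : ℝ) := by
  have hlog := logb_le_logb_of_le hb (by positivity) h
  rw [logb_pow, logb_pow, logb_self_eq_one hb, mul_one] at hlog
  exact (le_div_iff₀' (by positivity)).2 hlog

theorem logb_two_one_add_le {y : ℝ} (hy : 1 ≤ y) : logb 2 (1 + y) ≤ y := by
  rw [logb_le_iff_le_rpow one_lt_two (by linarith)]
  simpa only [mul_one, one_add_one_eq_two] using
    one_add_mul_self_le_rpow_one_add (s := 1) (by norm_num) hy

theorem eight_div_five_le_logb_two_pi : 8 / 5 ≤ logb 2 π := by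
  have h : (2 : ℝ) ^ 8 ≤ π ^ 5 := calc
    (2 : ℝ) ^ 8 ≤ 3.14 ^ 5 := by norm_num
    _ ≤ π ^ 5 := by gcongr; exact pi_gt_d2.le
  exact_mod_cast div_le_logb_of_pow_le_pow one_lt_two (by norm_num) h

theorem logb_two_pi_le_seven_div_four : logb 2 π ≤ 7 / 4 := by
  have h : π ^ 4 ≤ 2 ^ 7 := calc
    π ^ 4 ≤ 3.15 ^ 4 := by gcongr; exact pi_lt_d2.le
    _ ≤ 2 ^ 7 := by norm_num
  exact_mod_cast logb_le_div_of_pow_le_pow one_lt_two pi_pos (by norm_num) h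

/-! ### The profile `x ^ (-(lg x) / 4 + c)` -/

/-- The subexponential factor `x ^ (-(lg x) / 4) * x ^ c` shared by both bounds, which differ only
in the exponent `c`. -/
noncomputable def profile (c x : ℝ) : ℝ := x ^ (-(logb 2 x) / 4) * x ^ c

theorem profile_pos (c : ℝ) {x : ℝ} (hx : 0 < x) : 0 < profile c x := by
  unfold profile
  positivity

theorem profile_one (c : ℝ) : profile c 1 = 1 := by simp [profile]

theorem profile_eq_profile_mul_rpow (c : ℝ) {x y : ℝ} (hx : 0 < x) (hy : 0 < y) :
    profile c y = profile c x * (x / y) ^ ((logb 2 x + logb 2 y) / 4 - c) := by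
  simp only [profile, rpow_def_of_pos hx, rpow_def_of_pos hy, rpow_def_of_pos (div_pos hx hy),
    log_div hx.ne' hy.ne', ← exp_add, logb]
  congr 1
  ring

theorem profile_two_mul (c : ℝ) {x : ℝ} (hx : 0 < x) :
    profile c (2 * x) = 2 ^ (c - 1 / 4) / √x * profile c x := by
  have two_rpow : (2 : ℝ) ^ (logb 2 x / 2) = √x := by
    rw [div_eq_mul_one_div, rpow_mul zero_le_two, rpow_logb two_pos (by norm_num) hx, sqrt_eq_rpow]
  rw [profile_eq_profile_mul_rpow c hx (by positivity), div_mul_cancel_right₀ hx.ne' 2,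
    inv_rpow zero_le_two, ← rpow_neg zero_le_two, logb_mul two_ne_zero hx.ne',
    logb_self_eq_one one_lt_two, ← two_rpow, ← rpow_sub two_pos, mul_comm]
  ring_nf

theorem profile_two_mul_add_one (c : ℝ) {x : ℝ} (hx : 0 < x) :
    profile c (2 * x + 1) =
      2 ^ (c - 1 / 4) / √(x + 1) * (profile c (x + 1 / 2) * √((x + 1) / (x + 1 / 2))) := by
  have hx' : 0 ≤ x + 1 := by positivity
  rw [show 2 * x + 1 = 2 * (x + 1 / 2) by ring, profile_two_mul c (by positivity), sqrt_div hx']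
  field_simp

/-! ### Odd indices: the mean of neighbouring values of the profile -/

theorem exp_add_four_mul_exp_neg_le {x s a b : ℝ} (hs : 0 ≤ s) (hsx : 5 * s ≤ 6 * x - 2)
    (ha : a ≤ s / (2 * x)) (hb : s / (2 * x + 2) ≤ b) : exp a + 4 * exp (-b) ≤ 5 := by
  have hx : 0 < x := by linarith
  have hlt : s < 2 * x := by linarith
  have exp_a : exp a ≤ 2 * x / (2 * x - s) := calc
    exp a ≤ exp (s / (2 * x)) := exp_le_exp.2 ha
    _ ≤ 1 / (1 - s / (2 * x)) :=
      exp_bound_div_one_sub_of_interval (by positivity) ((div_lt_one (by positivity)).2 hlt)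
    _ = 2 * x / (2 * x - s) := by
      have : 2 * x - s ≠ 0 := by linarith
      field_simp
  have exp_neg_b : exp (-b) ≤ (2 * x + 2) / (2 * x + 2 + s) := calc
    exp (-b) ≤ exp (-(s / (2 * x + 2))) := exp_le_exp.2 (neg_le_neg hb)
    _ ≤ (s / (2 * x + 2) + 1)⁻¹ := by
      rw [exp_neg]
      gcongr
      exact add_one_le_exp _
    _ = (2 * x + 2) / (2 * x + 2 + s) := by field_simp; ring
  have rational : 2 * x / (2 * x - s) + 4 * ((2 * x + 2) / (2 * x + 2 + s)) =
      5 - s * (6 * x - 2 - 5 * s) / ((2 * x - s) * (2 * x + 2 + s)) := by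
    have : 2 * x - s ≠ 0 := by linarith
    field_simp
    ring
  have nonneg : 0 ≤ s * (6 * x - 2 - 5 * s) / ((2 * x - s) * (2 * x + 2 + s)) :=
    div_nonneg (mul_nonneg hs (by linarith)) (mul_nonneg (by linarith) (by linarith))
  linarith

theorem four_mul_exp_le_one_add_four_mul_exp_neg {u v : ℝ} (h : 4 * u + 5 * v ≤ 1) :
    4 * exp v ≤ 1 + 4 * exp (-u) := by
  have hv := add_one_le_exp (-v)
  have huv := add_one_le_exp (-u - v)
  calc 4 * exp v ≤ exp v * (exp (-v) + 4 * exp (-u - v)) := by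
        rw [mul_comm]
        gcongr
        linarith
    _ = 1 + 4 * exp (-u) := by
        rw [mul_add, mul_left_comm, ← exp_add, ← exp_add, add_neg_cancel, exp_zero,
          add_sub_cancel]

theorem rpow_add_four_mul_rpow_le_five {x s s' : ℝ} (hs : 0 ≤ s) (hss' : s ≤ s')
    (hsx : 5 * s ≤ 6 * x - 2) :
    ((x + 1 / 2) / x) ^ s + 4 * ((x + 1 / 2) / (x + 1)) ^ s' ≤ 5 := by
  have hx : 0 < x := by linarith
  have log_left : log ((x + 1 / 2) / x) ≤ 1 / (2 * x) := by
    refine (log_le_sub_one_of_pos (by positivity)).trans_eq ?_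
    field_simp
    ring
  have log_right : 1 / (2 * x + 2) ≤ -log ((x + 1 / 2) / (x + 1)) := by
    rw [le_neg]
    refine (log_le_sub_one_of_pos (by positivity)).trans_eq ?_
    field_simp
    ring
  rw [rpow_def_of_pos (by positivity), rpow_def_of_pos (by positivity),
    ← neg_neg (log _ * s'), ← neg_mul (log _) s']
  refine exp_add_four_mul_exp_neg_le hs hsx ?_ ?_
  · calc log ((x + 1 / 2) / x) * s ≤ 1 / (2 * x) * s := by gcongr
      _ = s / (2 * x) := by ring
  · calc s / (2 * x + 2) = 1 / (2 * x + 2) * s := by ring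
      _ ≤ -log ((x + 1 / 2) / (x + 1)) * s' :=
        mul_le_mul log_right hss' hs (le_trans (by positivity) log_right)

theorem rpow_add_four_mul_rpow_le {x s s' : ℝ} (hx : 0 < x) (hss' : s ≤ s')
    (hsx : 5 * s ≤ 6 * x - 2) (hs' : -(1 / 2) ≤ s') :
    ((x + 1 / 2) / x) ^ s + 4 * ((x + 1 / 2) / (x + 1)) ^ s' ≤
      5 * √((x + 1) / (x + 1 / 2)) := by
  have one_le_left : 1 ≤ (x + 1 / 2) / x := (one_le_div (by positivity)).2 (by linarith)
  have one_le_right : 1 ≤ (x + 1) / (x + 1 / 2) := (one_le_div (by positivity)).2 (by linarith)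
  have one_le_sqrt : 1 ≤ √((x + 1) / (x + 1 / 2)) := one_le_sqrt.2 one_le_right
  rcases le_total 0 s with hs | hs
  · linarith [rpow_add_four_mul_rpow_le_five hs hss' hsx]
  · have left_le_one : ((x + 1 / 2) / x) ^ s ≤ 1 :=
      rpow_le_one_of_one_le_of_nonpos one_le_left hs
    have right_le_sqrt : ((x + 1 / 2) / (x + 1)) ^ s' ≤ √((x + 1) / (x + 1 / 2)) := by
      rw [← inv_div (x + 1) (x + 1 / 2), inv_rpow (by positivity), ← rpow_neg (by positivity),
        sqrt_eq_rpow]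
      exact rpow_le_rpow_of_exponent_le one_le_right (by linarith)
    linarith

theorem le_rpow_add_four_mul_rpow {x s s' : ℝ} (hx : 1 ≤ x) (hs : 0 ≤ s) (hs' : 0 ≤ s')
    (hsx : 2 * s' ≤ x - 1) :
    4 * (√((x + 1) / (x + 1 / 2)) * exp (1 / (8 * ((x + 1) * (2 * x + 1))))) ≤
      ((x + 1 / 2) / x) ^ s + 4 * ((x + 1 / 2) / (x + 1)) ^ s' := by
  have left : 1 ≤ ((x + 1 / 2) / x) ^ s :=
    one_le_rpow ((one_le_div (by positivity)).2 (by linarith)) hs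
  have ratio_le_exp : (x + 1) / (x + 1 / 2) ≤ exp (1 / (2 * x + 1)) := by
    refine le_of_eq_of_le ?_ (add_one_le_exp _)
    field_simp
    ring
  have right : exp (-(s' / (2 * x + 1))) ≤ ((x + 1 / 2) / (x + 1)) ^ s' := by
    rw [← inv_div (x + 1) (x + 1 / 2), inv_rpow (by positivity), exp_neg, ← one_div_mul_eq_div,
      exp_mul]
    gcongr
  have sqrt_le : √((x + 1) / (x + 1 / 2)) ≤ exp (1 / (2 * x + 1) / 2) := by
    rw [exp_half]
    exact sqrt_le_sqrt ratio_le_exp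
  have weights : 4 * (s' / (2 * x + 1)) +
      5 * (1 / (2 * x + 1) / 2 + 1 / (8 * ((x + 1) * (2 * x + 1)))) ≤ 1 := by
    have combine : 4 * (s' / (2 * x + 1)) +
        5 * (1 / (2 * x + 1) / 2 + 1 / (8 * ((x + 1) * (2 * x + 1)))) =
        (4 * s' + 5 / 2 + 5 / 8 / (x + 1)) / (2 * x + 1) := by
      field_simp
      ring
    have defect : 5 / 8 / (x + 1) ≤ 1 / 2 := (div_le_iff₀ (by positivity)).2 (by linarith)
    rw [combine, div_le_one (by positivity)]
    linarith
  calc 4 * (√((x + 1) / (x + 1 / 2)) * exp (1 / (8 * ((x + 1) * (2 * x + 1)))))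
      ≤ 4 * exp (1 / (2 * x + 1) / 2 + 1 / (8 * ((x + 1) * (2 * x + 1)))) := by
        rw [exp_add]
        gcongr
    _ ≤ 1 + 4 * exp (-(s' / (2 * x + 1))) := four_mul_exp_le_one_add_four_mul_exp_neg weights
    _ ≤ ((x + 1 / 2) / x) ^ s + 4 * ((x + 1 / 2) / (x + 1)) ^ s' := by gcongr

theorem profile_add_four_mul_profile_eq (c : ℝ) {x : ℝ} (hx : 0 < x) :
    profile c x + 4 * profile c (x + 1) = profile c (x + 1 / 2) *
      (((x + 1 / 2) / x) ^ ((logb 2 (x + 1 / 2) + logb 2 x) / 4 - c) +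
        4 * ((x + 1 / 2) / (x + 1)) ^ ((logb 2 (x + 1 / 2) + logb 2 (x + 1)) / 4 - c)) := by
  have hy : 0 < x + 1 / 2 := by positivity
  rw [profile_eq_profile_mul_rpow c hy hx, profile_eq_profile_mul_rpow c hy (add_pos hx one_pos)]
  ring

theorem profile_add_four_mul_profile_le {c x : ℝ} (hc₀ : 0 ≤ c) (hc : c ≤ 7 / 8) (hx : 1 ≤ x) :
    profile c x + 4 * profile c (x + 1) ≤
      profile c (x + 1 / 2) * (5 * √((x + 1) / (x + 1 / 2))) := by
  have log_mono : logb 2 x ≤ logb 2 (x + 1) :=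
    logb_le_logb_of_le one_lt_two (by positivity) (by linarith)
  have log_x : logb 2 x ≤ x :=
    log_mono.trans (add_comm 1 x ▸ logb_two_one_add_le hx)
  have log_mid : logb 2 (x + 1 / 2) ≤ x := by
    refine le_trans ?_ (logb_two_one_add_le hx)
    exact logb_le_logb_of_le one_lt_two (by positivity) (by linarith)
  have log_mid_ge : 1 / 2 ≤ logb 2 (x + 1 / 2) := by
    have h : (2 : ℝ) ^ 1 ≤ (x + 1 / 2) ^ 2 := by nlinarith
    exact_mod_cast div_le_logb_of_pow_le_pow one_lt_two two_ne_zero h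
  have log_succ_ge : 1 ≤ logb 2 (x + 1) := by
    rw [le_logb_iff_rpow_le one_lt_two (by positivity), rpow_one]
    linarith
  have hy := (profile_pos c (show 0 < x + 1 / 2 by positivity)).le
  rw [profile_add_four_mul_profile_eq c (by positivity)]
  exact mul_le_mul_of_nonneg_left
    (rpow_add_four_mul_rpow_le (by linarith) (by linarith) (by linarith) (by linarith)) hy

theorem le_profile_add_four_mul_profile {c x : ℝ} (hc₀ : 3 / 8 ≤ c) (hc : c ≤ 1 / 2)
    (hx : 2 ≤ x) :
    profile c (x + 1 / 2) *
        (4 * (√((x + 1) / (x + 1 / 2)) * exp (1 / (8 * ((x + 1) * (2 * x + 1)))))) ≤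
      profile c x + 4 * profile c (x + 1) := by
  have log_ge {y : ℝ} (hy : 2 ≤ y) : 1 ≤ logb 2 y := by
    rwa [le_logb_iff_rpow_le one_lt_two (by positivity), rpow_one]
  have log_le {y : ℝ} (hy : 2 ≤ y) : logb 2 y ≤ y - 1 := by
    simpa only [add_sub_cancel] using logb_two_one_add_le (y := y - 1) (by linarith)
  have log_x := log_ge hx
  have log_mid := log_ge (y := x + 1 / 2) (by linarith)
  have log_mid_le := log_le (y := x + 1 / 2) (by linarith)
  have log_succ := log_ge (y := x + 1) (by linarith)
  have log_succ_le := log_le (y := x + 1) (by linarith)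
  have hy := (profile_pos c (show 0 < x + 1 / 2 by positivity)).le
  rw [profile_add_four_mul_profile_eq c (by positivity)]
  exact mul_le_mul_of_nonneg_left
    (le_rpow_add_four_mul_rpow (by linarith) (by linarith) (by linarith) (by linarith)) hy

/-! ### The two exponents -/

/-- The exponent `c` of the profile in the lower bound. -/
noncomputable def lowerExponent : ℝ := 5 / 4 - logb 2 π / 2

/-- The exponent `c` of the profile in the upper bound. -/
noncomputable def upperExponent : ℝ := logb 2 5 - 3 / 4 - logb 2 π / 2

theorem lowerExponent_mem_Icc : lowerExponent ∈ Set.Icc (3 / 8) (9 / 20) := by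
  have h₁ := eight_div_five_le_logb_two_pi
  have h₂ := logb_two_pi_le_seven_div_four
  constructor <;> unfold lowerExponent <;> linarith

theorem upperExponent_mem_Icc : upperExponent ∈ Set.Icc 0 (7 / 8) := by
  have pi_ge := eight_div_five_le_logb_two_pi
  have pi_le := logb_two_pi_le_seven_div_four
  have five_ge : 2 ≤ logb 2 5 := by
    rw [le_logb_iff_rpow_le one_lt_two (by norm_num)]
    norm_num
  have five_le : logb 2 5 ≤ 12 / 5 := by
    have h : (5 : ℝ) ^ 5 ≤ 2 ^ 12 := by norm_num
    exact_mod_cast logb_le_div_of_pow_le_pow one_lt_two (by norm_num) (by norm_num) h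
  constructor <;> unfold upperExponent <;> linarith

theorem two_rpow_sub_logb_two_pi_div_two (a : ℝ) : (2 : ℝ) ^ (a - logb 2 π / 2) = 2 ^ a / √π := by
  rw [rpow_sub two_pos, div_eq_mul_one_div (logb 2 π), rpow_mul zero_le_two,
    rpow_logb two_pos (by norm_num) pi_pos, sqrt_eq_rpow]

theorem two_rpow_lowerExponent_sub : (2 : ℝ) ^ (lowerExponent - 1 / 4) = 2 / √π := by
  rw [show lowerExponent - 1 / 4 = 1 - logb 2 π / 2 by unfold lowerExponent; ring,
    two_rpow_sub_logb_two_pi_div_two, rpow_one]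

theorem two_rpow_upperExponent_sub : (2 : ℝ) ^ (upperExponent - 1 / 4) = 5 / 2 / √π := by
  rw [show upperExponent - 1 / 4 = logb 2 5 - 1 - logb 2 π / 2 by unfold upperExponent; ring,
    two_rpow_sub_logb_two_pi_div_two, rpow_sub two_pos, rpow_one,
    rpow_logb two_pos (by norm_num) (by norm_num)]

/-! ### Supersolution and subsolution -/

theorem centralBinom_mul_profile_le {m : ℕ} (hm : m ≠ 0) :
    m.centralBinom * (2 * (4 ^ m * profile upperExponent m)) ≤
      4 ^ (2 * m) * profile upperExponent (2 * m) := by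
  have hx : (0 : ℝ) < m := by positivity
  have hg := profile_pos upperExponent hx
  calc m.centralBinom * (2 * (4 ^ m * profile upperExponent m))
      ≤ 4 ^ m / √(π * m) * (5 / 2 * (4 ^ m * profile upperExponent m)) := by
        gcongr
        · exact centralBinom_le_four_pow_div_sqrt hm
        · norm_num
    _ = 4 ^ (2 * m) * profile upperExponent (2 * m) := by
        rw [profile_two_mul _ hx, two_rpow_upperExponent_sub, sqrt_mul pi_nonneg]
        ring

theorem centralBinom_succ_mul_profile_add_le {m : ℕ} (hm : 1 ≤ m) :
    (m + 1).centralBinom *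
        (4 ^ m * profile upperExponent m + 4 ^ (m + 1) * profile upperExponent (m + 1)) ≤
      2 * (4 ^ (2 * m + 1) * profile upperExponent (2 * m + 1)) := by
  have hx : (1 : ℝ) ≤ m := mod_cast hm
  have hg := profile_pos upperExponent (zero_lt_one.trans_le hx)
  have hg' := profile_pos upperExponent (show (0 : ℝ) < m + 1 by positivity)
  have C_le := centralBinom_le_four_pow_div_sqrt m.succ_ne_zero
  rw [Nat.succ_eq_add_one, Nat.cast_add_one] at C_le
  calc (m + 1).centralBinom *
          (4 ^ m * profile upperExponent m + 4 ^ (m + 1) * profile upperExponent (m + 1))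
      ≤ 4 ^ (m + 1) / √(π * (m + 1)) *
          (4 ^ m * profile upperExponent m + 4 ^ (m + 1) * profile upperExponent (m + 1)) := by
        gcongr
    _ = 4 ^ (2 * m + 1) / √(π * (m + 1)) *
          (profile upperExponent m + 4 * profile upperExponent (m + 1)) := by ring
    _ ≤ 4 ^ (2 * m + 1) / √(π * (m + 1)) *
          (profile upperExponent (m + 1 / 2) * (5 * √((m + 1) / (m + 1 / 2)))) := by
        gcongr
        exact profile_add_four_mul_profile_le upperExponent_mem_Icc.1 upperExponent_mem_Icc.2 hx
    _ = 2 * (4 ^ (2 * m + 1) * profile upperExponent (2 * m + 1)) := by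
        rw [profile_two_mul_add_one _ (by positivity), two_rpow_upperExponent_sub,
          sqrt_mul pi_nonneg]
        ring

theorem isSupersolution_four_pow_mul_profile :
    IsSupersolution (fun n ↦ 4 ^ n * profile upperExponent n) 1 := by
  intro m hm
  push_cast
  exact ⟨centralBinom_mul_profile_le (Nat.one_le_iff_ne_zero.1 hm),
    centralBinom_succ_mul_profile_add_le hm⟩

theorem exp_mul_profile_two_mul_le {m : ℕ} (hm : m ≠ 0) :
    4 ^ (2 * m) * exp (1 / (2 * m) / 4) * profile lowerExponent (2 * m) ≤
      m.centralBinom * (2 * (4 ^ m * exp (1 / m / 4) * profile lowerExponent m)) := by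
  have hx : (0 : ℝ) < m := by positivity
  have hg := profile_pos lowerExponent hx
  have exp_eq : exp (1 / (2 * m) / 4) = exp (-(1 / m / 8)) * exp (1 / (m : ℝ) / 4) := by
    rw [← exp_add]
    ring_nf
  calc 4 ^ (2 * m) * exp (1 / (2 * m) / 4) * profile lowerExponent (2 * m)
      = 4 ^ m / √(π * m) * exp (-(1 / m / 8)) *
          (2 * (4 ^ m * exp (1 / m / 4) * profile lowerExponent m)) := by
        rw [profile_two_mul _ hx, two_rpow_lowerExponent_sub, sqrt_mul pi_nonneg, exp_eq]
        ring
    _ ≤ m.centralBinom * (2 * (4 ^ m * exp (1 / m / 4) * profile lowerExponent m)) := by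
        gcongr
        exact four_pow_div_sqrt_mul_exp_le_centralBinom hm

theorem exp_mul_profile_two_mul_add_one_le {m : ℕ} (hm : 2 ≤ m) :
    2 * (4 ^ (2 * m + 1) * exp (1 / (2 * m + 1) / 4) * profile lowerExponent (2 * m + 1)) ≤
      (m + 1).centralBinom * (4 ^ m * exp (1 / m / 4) * profile lowerExponent m +
        4 ^ (m + 1) * exp (1 / (m + 1) / 4) * profile lowerExponent (m + 1)) := by
  have hx : (2 : ℝ) ≤ m := mod_cast hm
  have hx₀ : (0 : ℝ) < m := by linarith
  have hg := profile_pos lowerExponent hx₀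
  have hg' := profile_pos lowerExponent (show (0 : ℝ) < m + 1 by positivity)
  have le_C := four_pow_div_sqrt_mul_exp_le_centralBinom m.succ_ne_zero
  rw [Nat.succ_eq_add_one, Nat.cast_add_one] at le_C
  have exp_eq : exp (1 / (2 * m + 1) / 4) = exp (1 / (8 * (((m : ℝ) + 1) * (2 * m + 1)))) *
      exp (-(1 / (m + 1) / 8)) * exp (1 / ((m : ℝ) + 1) / 4) := by
    rw [← exp_add, ← exp_add]
    congr 1
    field_simp
    ring
  calc 2 * (4 ^ (2 * m + 1) * exp (1 / (2 * m + 1) / 4) * profile lowerExponent (2 * m + 1))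
      = 4 ^ (2 * m + 1) / √(π * (m + 1)) * exp (-(1 / (m + 1) / 8)) * exp (1 / (m + 1) / 4) *
          (profile lowerExponent (m + 1 / 2) * (4 * (√((m + 1) / (m + 1 / 2)) *
            exp (1 / (8 * ((m + 1) * (2 * m + 1))))))) := by
        rw [profile_two_mul_add_one _ hx₀, two_rpow_lowerExponent_sub, sqrt_mul pi_nonneg, exp_eq]
        ring
    _ ≤ 4 ^ (2 * m + 1) / √(π * (m + 1)) * exp (-(1 / (m + 1) / 8)) * exp (1 / (m + 1) / 4) *
          (profile lowerExponent m + 4 * profile lowerExponent (m + 1)) := by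
        gcongr
        exact le_profile_add_four_mul_profile lowerExponent_mem_Icc.1
          (lowerExponent_mem_Icc.2.trans (by norm_num)) hx
    _ = 4 ^ (m + 1) / √(π * (m + 1)) * exp (-(1 / (m + 1) / 8)) *
          (4 ^ m * exp (1 / (m + 1) / 4) * profile lowerExponent m +
            4 ^ (m + 1) * exp (1 / (m + 1) / 4) * profile lowerExponent (m + 1)) := by ring
    _ ≤ (m + 1).centralBinom * (4 ^ m * exp (1 / m / 4) * profile lowerExponent m +
          4 ^ (m + 1) * exp (1 / (m + 1) / 4) * profile lowerExponent (m + 1)) := by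
        gcongr
        linarith

theorem isSubsolution_four_pow_mul_exp_mul_profile :
    IsSubsolution (fun n ↦ 4 ^ n * exp (1 / n / 4) * profile lowerExponent n) 2 := by
  intro m hm
  push_cast
  exact ⟨exp_mul_profile_two_mul_le (by omega), exp_mul_profile_two_mul_add_one_le hm⟩

/-! ### The two bounds -/

theorem f_le {n : ℕ} (hn : 1 ≤ n) : f n ≤ 1 / 4 * (4 ^ n * profile upperExponent n) := by
  refine (isSubsolution_f one_ne_zero).le_of_isSupersolution one_ne_zero
    (isSupersolution_four_pow_mul_profile.const_mul (by norm_num)) (fun k hk hk' ↦ ?_) hn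
  obtain rfl : k = 1 := by omega
  norm_num [f, profile_one]

theorem lower_bound_two :
    0.195 * (4 ^ 2 * exp (1 / 2 / 4) * profile lowerExponent 2) ≤ 4 := by
  have profile_two : profile lowerExponent 2 = 2 / √π := by
    simpa only [mul_one, sqrt_one, div_one, profile_one, two_rpow_lowerExponent_sub] using
      profile_two_mul lowerExponent one_pos
  have exp_le : exp (1 / 2 / 4) ≤ 1.135 := by
    refine le_of_pow_le_pow_left₀ (n := 8) (by norm_num) (by norm_num) ?_
    calc exp (1 / 2 / 4) ^ 8 = exp 1 := by rw [← exp_nat_mul]; norm_num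
      _ ≤ 1.135 ^ 8 := exp_one_lt_d9.le.trans (by norm_num)
  have sqrt_pi_ge : 1.771 ≤ √π := le_sqrt_of_sq_le (by linarith [pi_gt_d2])
  rw [profile_two, mul_div_assoc', mul_div_assoc', div_le_iff₀ (by positivity)]
  linarith

theorem lower_bound_three :
    0.195 * (4 ^ 3 * exp (1 / 3 / 4) * profile lowerExponent 3) ≤ 15 := by
  have logb_three : 3 / 2 ≤ logb 2 3 := by
    have h : (2 : ℝ) ^ 3 ≤ 3 ^ 2 := by norm_num
    exact_mod_cast div_le_logb_of_pow_le_pow one_lt_two two_ne_zero h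
  have profile_three : profile lowerExponent 3 ≤ 1.1 := calc
    profile lowerExponent 3 = 3 ^ (-(logb 2 3) / 4 + lowerExponent) :=
      (rpow_add three_pos _ _).symm
    _ ≤ 3 ^ ((12 : ℝ)⁻¹) := by
      refine rpow_le_rpow_of_exponent_le (by norm_num) ?_
      linarith [lowerExponent_mem_Icc.2]
    _ ≤ 1.1 := (rpow_inv_le_iff_of_pos (by norm_num) (by norm_num) (by norm_num)).2 (by norm_num)
  have exp_le : exp (1 / 3 / 4) ≤ 12 / 11 := by
    refine (exp_bound_div_one_sub_of_interval (by norm_num) (by norm_num)).trans_eq ?_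
    norm_num
  have hg := profile_pos lowerExponent three_pos
  calc 0.195 * (4 ^ 3 * exp (1 / 3 / 4) * profile lowerExponent 3)
      ≤ 0.195 * (4 ^ 3 * (12 / 11) * 1.1) := by gcongr
    _ ≤ 15 := by norm_num

theorem le_f {n : ℕ} (hn : 2 ≤ n) :
    0.195 * (4 ^ n * exp (1 / n / 4) * profile lowerExponent n) ≤ f n := by
  refine (isSubsolution_four_pow_mul_exp_mul_profile.const_mul (by norm_num)).le_of_isSupersolution
    two_ne_zero (isSupersolution_f two_ne_zero) (fun k hk hk' ↦ ?_) hn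
  obtain rfl | rfl : k = 2 ∨ k = 3 := by omega
  · simpa [f] using lower_bound_two
  · simpa [f] using lower_bound_three

theorem stmt_10 (n : ℕ) (hn : 1 ≤ n) :
    0.195 * 4 ^ (n : ℝ) * (n : ℝ) ^ (-(Real.logb 2 n) / 4) *
        (n : ℝ) ^ ((5 : ℝ)/4 - (Real.logb 2 Real.pi) / 2) ≤ (f n : ℝ) ∧
    (f n : ℝ) ≤ (1/4) * 4 ^ (n : ℝ) * (n : ℝ) ^ (-(Real.logb 2 n) / 4) *
        (n : ℝ) ^ (Real.logb 2 5 - 3/4 - (Real.logb 2 Real.pi) / 2) := by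
  simp only [mul_assoc, rpow_natCast]
  change 0.195 * (4 ^ n * profile lowerExponent n) ≤ f n ∧
    f n ≤ 1 / 4 * (4 ^ n * profile upperExponent n)
  refine ⟨?_, f_le hn⟩
  rcases hn.eq_or_lt with rfl | hn
  · norm_num [f, profile_one]
  · have hg := profile_pos lowerExponent (Nat.cast_pos.2 (zero_lt_one.trans hn))
    have one_le_exp : 1 ≤ exp (1 / (n : ℝ) / 4) := one_le_exp (by positivity)
    calc 0.195 * (4 ^ n * profile lowerExponent n)
        ≤ 0.195 * (4 ^ n * exp (1 / n / 4) * profile lowerExponent n) := by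
          gcongr
          exact le_mul_of_one_le_right (by positivity) one_le_exp
      _ ≤ f n := le_f hn
end

section
/- Let ℓ(n,k) denote the minimum alphabetic length of a regular expression (over union, concatenation, Kleene star) specifying a subset of the permutation language P_n of cardinality at least k. Define f by f(1)=1 and f(n) = C(n,⌊n/2⌋)(f(⌊n/2⌋)+f(⌈n/2⌉)) for n>1. Then for all n ≥ 1 and 1 ≤ k ≤ n!, ℓ(n,k)/k ≥ ℓ(n,n!)/n! ≥ f(n)/n!. -/
/-- Alphabetic length of a regular expression: the number of occurrences of
alphabet symbols. -/
def alen {α : Type*} : RegularExpression α → ℕ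
  | RegularExpression.zero => 0
  | RegularExpression.epsilon => 0
  | RegularExpression.char _ => 1
  | RegularExpression.plus r s => alen r + alen s
  | RegularExpression.comp r s => alen r + alen s
  | RegularExpression.star r => alen r

/-- The permutation language `P n`: all words over an `n`-letter alphabet using
each letter exactly once. -/
def permLang (n : ℕ) : Language (Fin n) :=
  {w | w.Perm (List.finRange n)}

/-- `ell n k` is the minimum alphabetic length of a regular expression
specifying a subset of `P n` of cardinality at least `k`. -/
noncomputable def ell (n k : ℕ) : ℕ :=
  sInf {m | ∃ r : RegularExpression (Fin n),
    (∀ w, w ∈ r.matches' → w ∈ permLang n) ∧ k ≤ Set.ncard {w | w ∈ r.matches'} ∧ alen r = m}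

/-! Let `g` be `f` with the value `0` at `0`. An expression all of whose words are rearrangements
of one multiset of size `n` satisfies `g n * #words ≤ alen r * n!`. Indeed, a concatenation `r₁ r₂`
splits the multiset into parts of fixed sizes `p + q = n`, so this bound passes through
concatenation as soon as `g (p + q) ≤ C(p + q, p) (g p + g q)`: splitting in halves is optimal.
For `2 ≤ p` and `p + 3 ≤ q` one halves both parts, `p = a + b` and `q = c + d`, and compares with
the balanced split of `p + q` into `a + c` and `b + d`; the growth `3 g n ≤ g (n + 1)` absorbs the
cost of the exchange. Conversely, splitting in halves recursively yields an expression of length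
exactly `g n` for all permutations, so the ratio of length to number of words is least there. -/

/-- The alphabetic length `g n` of the expression for all arrangements of `n` distinct letters
obtained by recursive halving. It is `f n` except at `n = 0`, where `f 0 = 1` although the
empty word needs no symbol. -/
def halvingCost (n : ℕ) : ℕ :=
  if n = 0 then 0 else f n

/-- The language of all words whose multiset of letters is `s`. -/
def rearrangements {α : Type*} (s : Multiset α) : Language α :=
  {w | (w : Multiset α) = s}

/-- The expression for all arrangements of an `n`-element set `S` that chooses the set `A` of
letters of the first half and recurses on `A` and `S \ A`. The size `n` is a separate argument so
that the recursion is that of `f`. -/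
noncomputable def halvingExpr {α : Type*} [DecidableEq α] :
    ℕ → Finset α → RegularExpression α
  | 0, _ => 1
  | 1, S => (S.toList.map RegularExpression.char).sum
  | n + 2, S => ((S.powersetCard ((n + 2) / 2)).toList.map fun A =>
      halvingExpr ((n + 2) / 2) A * halvingExpr ((n + 2 + 1) / 2) (S \ A)).sum
decreasing_by all_goals omega

section BinomialCoefficients

theorem succ_mul_choose_two_mul_add_one (m : ℕ) :
    (m + 1) * (2 * m + 1).choose m = (2 * m + 1) * m.centralBinom := by
  rw [← Nat.choose_symm_half, mul_comm, ← Nat.add_one_mul_choose_eq,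
    Nat.centralBinom_eq_two_mul_choose]

theorem centralBinom_succ_eq_two_mul_choose (m : ℕ) :
    (m + 1).centralBinom = 2 * (2 * m + 1).choose m := by
  rw [Nat.centralBinom_eq_two_mul_choose, mul_add_one, Nat.choose_succ_succ', Nat.choose_symm_half,
    two_mul ((2 * m + 1).choose m)]

theorem add_one_mul_choose_le {a b d : ℕ} (had : a < d) :
    (a + b + 1) * (a + b).choose a ≤ (a + 1) * (b + d).choose b := by
  calc (a + b + 1) * (a + b).choose a
      = (a + 1) * (b + (a + 1)).choose b := by
        rw [Nat.add_one_mul_choose_eq, mul_comm, add_right_comm, Nat.choose_symm_add, add_comm b]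
    _ ≤ (a + 1) * (b + d).choose b :=
        Nat.mul_le_mul_left _ (Nat.choose_le_choose b (by lia))

theorem choose_mul_choose_mul_choose_comm (a b c d : ℕ) :
    (a + b + (c + d)).choose (a + c) * (a + c).choose a * (b + d).choose b =
      (a + b + (c + d)).choose (a + b) * (a + b).choose a * (c + d).choose c := by
  have choose_mul_factorials (i j : ℕ) : (i + j).choose i * i.factorial * j.factorial =
      (i + j).factorial := by
    rw [Nat.choose_symm_add, Nat.add_choose_mul_factorial_mul_factorial]
  have hpos : 0 < a.factorial * b.factorial * c.factorial * d.factorial := by positivity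
  refine Nat.eq_of_mul_eq_mul_right hpos ?_
  have rows := choose_mul_factorials (a + b) (c + d)
  have columns := choose_mul_factorials (a + c) (b + d)
  rw [← choose_mul_factorials a b, ← choose_mul_factorials c d] at rows
  rw [← choose_mul_factorials a c, ← choose_mul_factorials b d,
    add_add_add_comm a c b d] at columns
  linarith

end BinomialCoefficients

section HalvingCost

theorem halvingCost_zero : halvingCost 0 = 0 := rfl

theorem halvingCost_eq_f {n : ℕ} (hn : 1 ≤ n) : halvingCost n = f n :=
  if_neg (by lia)

theorem halvingCost_one : halvingCost 1 = 1 := by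
  rw [halvingCost_eq_f le_rfl, f]

theorem halvingCost_add_two (n : ℕ) :
    halvingCost (n + 2) = (n + 2).choose ((n + 2) / 2) *
      (halvingCost ((n + 2) / 2) + halvingCost ((n + 2 + 1) / 2)) := by
  rw [halvingCost_eq_f (by lia), halvingCost_eq_f (by lia), halvingCost_eq_f (by lia), f]

theorem halvingCost_two_mul_add_one (m : ℕ) :
    halvingCost (2 * m + 1) =
      (2 * m + 1).choose m * (halvingCost m + halvingCost (m + 1)) := by
  rcases m with _ | m
  · simp [halvingCost_zero, halvingCost_one]
  · have h := halvingCost_add_two (2 * m + 1)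
    rwa [show (2 * m + 1 + 2) / 2 = m + 1 by lia,
      show (2 * m + 1 + 2 + 1) / 2 = m + 1 + 1 by lia] at h

theorem halvingCost_two_mul (m : ℕ) :
    halvingCost (2 * m) = 2 * m.centralBinom * halvingCost m := by
  rcases m with _ | m
  · simp [halvingCost_zero]
  · have h := halvingCost_add_two (2 * m)
    rw [show (2 * m + 2) / 2 = m + 1 by lia, show (2 * m + 2 + 1) / 2 = m + 1 by lia] at h
    rw [mul_add_one, h, Nat.centralBinom_eq_two_mul_choose, mul_add_one]
    ring

theorem halvingCost_two_mul_add_two (m : ℕ) :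
    halvingCost (2 * m + 2) = 4 * (2 * m + 1).choose m * halvingCost (m + 1) := by
  rw [← mul_add_one, halvingCost_two_mul, centralBinom_succ_eq_two_mul_choose]
  ring

theorem halvingCost_add_of_le_add_one {p q : ℕ} (hpq : p ≤ q + 1) (hqp : q ≤ p + 1) :
    halvingCost (p + q) = (p + q).choose p * (halvingCost p + halvingCost q) := by
  wlog hle : p ≤ q generalizing p q
  · rw [add_comm p, this hqp hpq (by lia), Nat.choose_symm_add, add_comm (halvingCost q)]
  obtain rfl | rfl : q = p ∨ q = p + 1 := by lia
  · rw [← two_mul, halvingCost_two_mul, Nat.centralBinom_eq_two_mul_choose]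
    ring
  · rw [← add_assoc, ← two_mul, halvingCost_two_mul_add_one]

theorem three_mul_halvingCost_le_succ (n : ℕ) : 3 * halvingCost n ≤ halvingCost (n + 1) := by
  induction n using Nat.strong_induction_on with
  | _ n ih =>
    obtain ⟨m, rfl | rfl⟩ := Nat.even_or_odd' n
    · rcases Nat.eq_zero_or_pos m with rfl | hm
      · simp [halvingCost_zero]
      have hchoose : 3 * m.centralBinom ≤ 2 * (2 * m + 1).choose m := by
        have := succ_mul_choose_two_mul_add_one m
        nlinarith
      calc 3 * halvingCost (2 * m)
          = 2 * (3 * m.centralBinom) * halvingCost m := by rw [halvingCost_two_mul]; ring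
        _ ≤ 2 * (2 * (2 * m + 1).choose m) * halvingCost m := by gcongr
        _ = (2 * m + 1).choose m * (halvingCost m + 3 * halvingCost m) := by ring
        _ ≤ (2 * m + 1).choose m * (halvingCost m + halvingCost (m + 1)) := by
          gcongr
          exact ih m (by lia)
        _ = halvingCost (2 * m + 1) := (halvingCost_two_mul_add_one m).symm
    · calc 3 * halvingCost (2 * m + 1)
          = (2 * m + 1).choose m * (3 * halvingCost m + 3 * halvingCost (m + 1)) := by
            rw [halvingCost_two_mul_add_one]; ring
        _ ≤ (2 * m + 1).choose m * (halvingCost (m + 1) + 3 * halvingCost (m + 1)) := by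
          gcongr
          exact ih m (by lia)
        _ = halvingCost (2 * m + 2) := by rw [halvingCost_two_mul_add_two]; ring

theorem three_mul_halvingCost_le_of_lt {m n : ℕ} (hmn : m < n) :
    3 * halvingCost m ≤ halvingCost n := by
  induction n, hmn using Nat.le_induction with
  | base => exact three_mul_halvingCost_le_succ m
  | succ n _ ih =>
    have := three_mul_halvingCost_le_succ n
    lia

theorem add_one_le_mul_halvingCost {n : ℕ} (hn : 2 ≤ n) : n + 1 ≤ n * halvingCost n := by
  have := three_mul_halvingCost_le_of_lt (show 1 < n by lia)
  rw [halvingCost_one] at this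
  nlinarith

end HalvingCost

section HalvingIsOptimal

theorem halvingCost_two_mul_add_one_le {m : ℕ} (hm : 2 ≤ m)
    (h : halvingCost (m + 1) ≤ (m + 1) * (1 + halvingCost m)) :
    halvingCost (2 * m + 1) ≤ (2 * m + 1) * halvingCost (2 * m) := by
  refine Nat.le_of_mul_le_mul_left ?_ m.succ_pos
  calc (m + 1) * halvingCost (2 * m + 1)
      = (2 * m + 1) * (m.centralBinom * (halvingCost m + halvingCost (m + 1))) := by
        rw [halvingCost_two_mul_add_one, ← mul_assoc, succ_mul_choose_two_mul_add_one, mul_assoc]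
    _ ≤ (2 * m + 1) * (m.centralBinom * (halvingCost m + (m + 1) * (1 + halvingCost m))) := by
        gcongr
    _ = (2 * m + 1) * (m.centralBinom * ((m + 1) + (m + 2) * halvingCost m)) := by ring
    _ ≤ (2 * m + 1) * (m.centralBinom * (m * halvingCost m + (m + 2) * halvingCost m)) := by
        gcongr
        exact add_one_le_mul_halvingCost hm
    _ = (m + 1) * ((2 * m + 1) * halvingCost (2 * m)) := by
        rw [halvingCost_two_mul]; ring

theorem halvingCost_two_mul_add_two_le (m : ℕ) :
    halvingCost (2 * m + 2) ≤ 4 * halvingCost (2 * m + 1) := by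
  rw [halvingCost_two_mul_add_two, halvingCost_two_mul_add_one, mul_assoc]
  gcongr
  exact Nat.le_add_left _ _

theorem halvingCost_succ_le (n : ℕ) :
    halvingCost (n + 1) ≤ (n + 1) * (1 + halvingCost n) := by
  induction n using Nat.strong_induction_on with
  | _ n ih =>
    obtain ⟨m, rfl | rfl⟩ := Nat.even_or_odd' n
    · obtain rfl | rfl | hm : m = 0 ∨ m = 1 ∨ 2 ≤ m := by lia
      · simp [halvingCost_zero, halvingCost_one]
      · simp [halvingCost_add_two, halvingCost_one]
      · exact (halvingCost_two_mul_add_one_le hm (ih m (by lia))).trans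
          (Nat.mul_le_mul_left _ (Nat.le_add_left _ _))
    · rcases Nat.eq_zero_or_pos m with rfl | hm
      · simp [halvingCost_add_two, halvingCost_one]
      · exact (halvingCost_two_mul_add_two_le m).trans (Nat.mul_le_mul (by lia) (by lia))

theorem halvingCost_add_add_two_le {i : ℕ} (hi : 1 ≤ i) :
    halvingCost (i + (i + 2)) ≤
      (i + (i + 2)).choose i * (halvingCost i + halvingCost (i + 2)) := by
  have hchoose : (i + (i + 2)).choose (i + 1) * (i + 1) = (i + (i + 2)).choose i * (i + 2) := by
    rw [Nat.choose_succ_right_eq, Nat.add_sub_cancel_left]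
  have hbalanced : halvingCost (i + (i + 2)) =
      (i + (i + 2)).choose (i + 1) * (2 * halvingCost (i + 1)) := by
    rw [show i + (i + 2) = (i + 1) + (i + 1) by ring,
      halvingCost_add_of_le_add_one (by lia) (by lia), two_mul (halvingCost _)]
  refine Nat.le_of_mul_le_mul_left ?_ i.succ_pos
  calc (i + 1) * halvingCost (i + (i + 2))
      = (i + (i + 2)).choose i * ((i + 2) * (2 * halvingCost (i + 1))) := by
        rw [hbalanced]; linear_combination (2 * halvingCost (i + 1)) * hchoose
    _ ≤ (i + (i + 2)).choose i * ((i + 1) * (3 * halvingCost (i + 1))) :=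
        Nat.mul_le_mul_left _ (by nlinarith)
    _ ≤ (i + (i + 2)).choose i * ((i + 1) * (halvingCost i + halvingCost (i + 2))) := by
        gcongr
        exact (three_mul_halvingCost_le_succ (i + 1)).trans (Nat.le_add_left _ _)
    _ = (i + 1) * ((i + (i + 2)).choose i * (halvingCost i + halvingCost (i + 2))) := by ring

variable {a b c d : ℕ}

theorem choose_mul_halvingCost_add_le (hb : 1 ≤ b) (hab : a ≤ b + 1) (hac : a < c) (had : a < d) :
    (a + b).choose a * (halvingCost a + halvingCost c) ≤ (b + d).choose b * halvingCost c := by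
  have hgrowth : (a + 1) * (halvingCost a + halvingCost c) ≤ (a + b + 1) * halvingCost c := by
    have := three_mul_halvingCost_le_of_lt hac
    calc (a + 1) * (halvingCost a + halvingCost c)
        = (a + 1) * halvingCost a + (a + 1) * halvingCost c := mul_add _ _ _
      _ ≤ 3 * b * halvingCost a + (a + 1) * halvingCost c := by gcongr; lia
      _ = b * (3 * halvingCost a) + (a + 1) * halvingCost c := by ring
      _ ≤ b * halvingCost c + (a + 1) * halvingCost c := by gcongr
      _ = (a + b + 1) * halvingCost c := by ring
  refine Nat.le_of_mul_le_mul_left ?_ a.succ_pos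
  calc (a + 1) * ((a + b).choose a * (halvingCost a + halvingCost c))
      = (a + b).choose a * ((a + 1) * (halvingCost a + halvingCost c)) := by ring
    _ ≤ (a + b).choose a * ((a + b + 1) * halvingCost c) := by gcongr
    _ = (a + b + 1) * (a + b).choose a * halvingCost c := by ring
    _ ≤ (a + 1) * (b + d).choose b * halvingCost c :=
        Nat.mul_le_mul_right _ (add_one_mul_choose_le had)
    _ = (a + 1) * ((b + d).choose b * halvingCost c) := mul_assoc _ _ _

theorem choose_mul_choose_mul_halvingCost_add_le
    (hb : 1 ≤ b) (hab : a ≤ b + 1) (hac : a < c) (had : a < d) :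
    (a + b + (c + d)).choose (a + c) * ((a + c).choose a * (halvingCost a + halvingCost c)) ≤
      (a + b + (c + d)).choose (a + b) * ((c + d).choose c * halvingCost c) := by
  refine Nat.le_of_mul_le_mul_left ?_ (Nat.choose_pos (Nat.le_add_right a b))
  calc (a + b).choose a * ((a + b + (c + d)).choose (a + c) *
        ((a + c).choose a * (halvingCost a + halvingCost c)))
      = (a + b + (c + d)).choose (a + c) * (a + c).choose a *
        ((a + b).choose a * (halvingCost a + halvingCost c)) := by ring
    _ ≤ (a + b + (c + d)).choose (a + c) * (a + c).choose a *
        ((b + d).choose b * halvingCost c) :=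
        Nat.mul_le_mul_left _ (choose_mul_halvingCost_add_le hb hab hac had)
    _ = (a + b).choose a * ((a + b + (c + d)).choose (a + b) *
        ((c + d).choose c * halvingCost c)) := by
        linear_combination halvingCost c * choose_mul_choose_mul_choose_comm a b c d

theorem choose_mul_halvingCost_exchange_le (ha : 1 ≤ a) (hab : a ≤ b) (hba : b ≤ a + 1)
    (hbc : b < c) (hbd : b < d) :
    (a + b + (c + d)).choose (a + c) *
        ((a + c).choose a * (halvingCost a + halvingCost c) +
          (b + d).choose b * (halvingCost b + halvingCost d)) ≤
      (a + b + (c + d)).choose (a + b) *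
        ((c + d).choose c * (halvingCost c + halvingCost d)) := by
  -- The two terms are bounded separately; the second is the first with `a ↔ b` and `c ↔ d`.
  have hfirst := choose_mul_choose_mul_halvingCost_add_le (a := a) (b := b) (c := c) (d := d)
    (by lia) (by lia) (by lia) (by lia)
  have hsecond := choose_mul_choose_mul_halvingCost_add_le (a := b) (b := a) (c := d) (d := c)
    ha hba hbd hbc
  have hsymm : (a + b + (c + d)).choose (b + d) = (a + b + (c + d)).choose (a + c) := by
    rw [add_add_add_comm, Nat.choose_symm_add]
  rw [add_comm b a, add_comm d c, hsymm, ← Nat.choose_symm_add (a := c)] at hsecond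
  linarith

theorem halvingCost_add_le (i j : ℕ) :
    halvingCost (i + j) ≤ (i + j).choose i * (halvingCost i + halvingCost j) := by
  induction hn : i + j using Nat.strong_induction_on generalizing i j with
  | _ n ih =>
    subst hn
    wlog hij : i ≤ j generalizing i j
    · rw [Nat.choose_symm_add, add_comm i, add_comm (halvingCost i)]
      exact this j i (by rwa [add_comm j]) (by lia)
    obtain rfl | rfl | hj | ⟨hi, rfl⟩ | ⟨hi, hj⟩ :
        i = 0 ∨ i = 1 ∨ j ≤ i + 1 ∨ (1 ≤ i ∧ j = i + 2) ∨ (2 ≤ i ∧ i + 3 ≤ j) := by lia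
    · simp
    · simpa [add_comm 1 j, halvingCost_one] using halvingCost_succ_le j
    · exact (halvingCost_add_of_le_add_one (by lia) hj).le
    · exact halvingCost_add_add_two_le hi
    obtain ⟨a, b, rfl, hab, hba⟩ : ∃ a b, i = a + b ∧ a ≤ b ∧ b ≤ a + 1 :=
      ⟨i / 2, (i + 1) / 2, by lia, by lia, by lia⟩
    obtain ⟨c, d, rfl, hdc, hcd⟩ : ∃ c d, j = c + d ∧ d ≤ c ∧ c ≤ d + 1 :=
      ⟨(j + 1) / 2, j / 2, by lia, by lia, by lia⟩
    calc halvingCost (a + b + (c + d))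
        = (a + b + (c + d)).choose (a + c) * (halvingCost (a + c) + halvingCost (b + d)) := by
          rw [add_add_add_comm, halvingCost_add_of_le_add_one (by lia) (by lia)]
      _ ≤ (a + b + (c + d)).choose (a + c) *
            ((a + c).choose a * (halvingCost a + halvingCost c) +
              (b + d).choose b * (halvingCost b + halvingCost d)) := by
          gcongr
          · exact ih _ (by lia) a c rfl
          · exact ih _ (by lia) b d rfl
      _ ≤ (a + b + (c + d)).choose (a + b) *
            ((c + d).choose c * (halvingCost c + halvingCost d)) :=
          choose_mul_halvingCost_exchange_le (by lia) hab hba (by lia) (by lia)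
      _ = (a + b + (c + d)).choose (a + b) * halvingCost (c + d) := by
          rw [halvingCost_add_of_le_add_one hcd (by lia)]
      _ ≤ (a + b + (c + d)).choose (a + b) * (halvingCost (a + b) + halvingCost (c + d)) := by
          gcongr
          exact Nat.le_add_left _ _

end HalvingIsOptimal

section Rearrangements

variable {α : Type*} {s : Multiset α} {L M : Language α}

theorem mem_rearrangements {w : List α} : w ∈ rearrangements s ↔ (w : Multiset α) = s :=
  Iff.rfl

theorem permLang_eq_rearrangements (n : ℕ) :
    permLang n = rearrangements (Finset.univ : Finset (Fin n)).val :=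
  Language.ext fun _ => Multiset.coe_eq_coe.symm

theorem setOf_mem_rearrangements_coe [DecidableEq α] (l : List α) :
    {w | w ∈ rearrangements (l : Multiset α)} = (l.permutations.toFinset : Set (List α)) := by
  ext w
  simp [mem_rearrangements]

theorem finite_rearrangements (s : Multiset α) : {w | w ∈ rearrangements s}.Finite := by
  classical
  induction s using Quotient.inductionOn with
  | _ l => exact setOf_mem_rearrangements_coe l ▸ Finset.finite_toSet _

theorem ncard_rearrangements_le (s : Multiset α) :
    {w | w ∈ rearrangements s}.ncard ≤ s.card.factorial := by
  classical
  induction s using Quotient.inductionOn with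
  | _ l =>
    rw [Multiset.quot_mk_to_coe, setOf_mem_rearrangements_coe, Set.ncard_coe_finset,
      Multiset.coe_card, ← List.length_permutations]
    exact List.toFinset_card_le _

theorem ncard_rearrangements_of_nodup (hs : s.Nodup) :
    {w | w ∈ rearrangements s}.ncard = s.card.factorial := by
  classical
  induction s using Quotient.inductionOn with
  | _ l =>
    rw [Multiset.quot_mk_to_coe, setOf_mem_rearrangements_coe, Set.ncard_coe_finset,
      Multiset.coe_card, ← List.length_permutations]
    exact List.toFinset_card_of_nodup (List.nodup_permutations l hs)

theorem finite_of_le_rearrangements (hL : L ≤ rearrangements s) : {w | w ∈ L}.Finite :=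
  (finite_rearrangements s).subset hL

theorem ncard_le_factorial_of_le_rearrangements (hL : L ≤ rearrangements s) :
    {w | w ∈ L}.ncard ≤ s.card.factorial :=
  (Set.ncard_le_ncard hL (finite_rearrangements s)).trans (ncard_rearrangements_le s)

theorem ncard_mul_le (hL : {w | w ∈ L}.Finite) (hM : {w | w ∈ M}.Finite) :
    {w | w ∈ L * M}.ncard ≤ {w | w ∈ L}.ncard * {w | w ∈ M}.ncard := by
  have himage : {w | w ∈ L * M} =
      (fun p : List α × List α => p.1 ++ p.2) '' ({w | w ∈ L} ×ˢ {w | w ∈ M}) :=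
    (Set.image_prod _).symm
  rw [himage, ← Set.ncard_prod]
  exact Set.ncard_image_le (hL.prod hM)

theorem exists_le_rearrangements_of_mul_le {u v : List α} (hu : u ∈ L) (hv : v ∈ M)
    (h : L * M ≤ rearrangements s) :
    ∃ s₁ s₂, s₁ + s₂ = s ∧ L ≤ rearrangements s₁ ∧ M ≤ rearrangements s₂ := by
  have hadd {x y : List α} (hx : x ∈ L) (hy : y ∈ M) : (x : Multiset α) + (y : Multiset α) = s :=
    h (Language.append_mem_mul hx hy)
  exact ⟨u, v, hadd hu hv,
    fun w hw => add_right_cancel ((hadd hw hv).trans (hadd hu hv).symm),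
    fun w hw => add_left_cancel ((hadd hu hw).trans (hadd hu hv).symm)⟩

theorem rearrangements_mul_le (s t : Multiset α) :
    rearrangements s * rearrangements t ≤ rearrangements (s + t) := by
  rintro _ ⟨u, hu, v, hv, rfl⟩
  exact (Multiset.coe_add u v).symm.trans (congrArg₂ _ hu hv)

theorem mem_rearrangements_iff_exists_powersetCard [DecidableEq α] {S : Finset α} {k : ℕ}
    (hk : k ≤ S.card) {w : List α} :
    w ∈ rearrangements S.val ↔
      ∃ A ∈ S.powersetCard k, w ∈ rearrangements A.val * rearrangements (S \ A).val := by
  constructor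
  · intro hw
    rw [mem_rearrangements] at hw
    have hsplit : (w.take k : Multiset α) + (w.drop k : Multiset α) = S.val := by
      rw [Multiset.coe_add, List.take_append_drop, hw]
    have htake : (w.take k : Multiset α) ≤ S.val := hsplit ▸ Multiset.le_add_right _ _
    have hlength : w.length = S.card := by rw [Finset.card_def, ← hw, Multiset.coe_card]
    refine ⟨⟨w.take k, Multiset.nodup_of_le htake S.nodup⟩,
      Finset.mem_powersetCard.2 ⟨Finset.val_le_iff.1 htake, ?_⟩,
      Language.mem_mul.2 ⟨w.take k, rfl, w.drop k, ?_, List.take_append_drop k w⟩⟩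
    · rw [Finset.card_mk, Multiset.coe_card, List.length_take, hlength, min_eq_left hk]
    · exact (Finset.sdiff_val _ _).trans (tsub_eq_of_eq_add_rev hsplit.symm) |>.symm
  · rintro ⟨A, hA, hw⟩
    have hAS : A.val ≤ S.val := Finset.val_le_iff.2 (Finset.mem_powersetCard.1 hA).1
    have := rearrangements_mul_le _ _ hw
    rwa [Finset.sdiff_val, add_tsub_cancel_of_le hAS] at this

end Rearrangements

section LowerBound

variable {α : Type*}

theorem halvingCost_mul_ncard_mul_le {s₁ s₂ : Multiset α} {L M : Language α} {l m : ℕ}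
    (hL : L ≤ rearrangements s₁) (hM : M ≤ rearrangements s₂)
    (hl : halvingCost s₁.card * {w | w ∈ L}.ncard ≤ l * s₁.card.factorial)
    (hm : halvingCost s₂.card * {w | w ∈ M}.ncard ≤ m * s₂.card.factorial) :
    halvingCost (s₁ + s₂).card * {w | w ∈ L * M}.ncard ≤ (l + m) * (s₁ + s₂).card.factorial := by
  rw [Multiset.card_add]
  set p := s₁.card
  set q := s₂.card
  set x := {w | w ∈ L}.ncard
  set y := {w | w ∈ M}.ncard
  have hx : x ≤ p.factorial := ncard_le_factorial_of_le_rearrangements hL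
  have hy : y ≤ q.factorial := ncard_le_factorial_of_le_rearrangements hM
  calc halvingCost (p + q) * {w | w ∈ L * M}.ncard
      ≤ (p + q).choose p * (halvingCost p + halvingCost q) * (x * y) :=
        Nat.mul_le_mul (halvingCost_add_le p q)
          (ncard_mul_le (finite_of_le_rearrangements hL) (finite_of_le_rearrangements hM))
    _ = (p + q).choose p * (halvingCost p * x * y + halvingCost q * y * x) := by ring
    _ ≤ (p + q).choose p *
          (l * p.factorial * q.factorial + m * q.factorial * p.factorial) := by gcongr
    _ = (l + m) * ((p + q).choose p * p.factorial * q.factorial) := by ring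
    _ = (l + m) * (p + q).factorial := by
        rw [Nat.choose_symm_add, Nat.add_choose_mul_factorial_mul_factorial]

theorem halvingCost_mul_ncard_matches'_le (r : RegularExpression α) {s : Multiset α}
    (h : r.matches' ≤ rearrangements s) :
    halvingCost s.card * {w | w ∈ r.matches'}.ncard ≤ alen r * s.card.factorial := by
  induction r generalizing s with
  | zero =>
    have hempty : {w | w ∈ (RegularExpression.zero (α := α)).matches'} = ∅ := rfl
    rw [hempty, Set.ncard_empty]
    exact Nat.zero_le _
  | epsilon =>
    obtain rfl : ↑([] : List α) = s := h Language.nil_mem_one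
    simp [halvingCost_zero]
  | char a =>
    obtain rfl : ↑[a] = s := h (Set.mem_singleton [a])
    have hsingleton : {w | w ∈ (RegularExpression.char a).matches'} = {[a]} := rfl
    rw [hsingleton, Set.ncard_singleton]
    simp [halvingCost_one, alen]
  | plus r₁ r₂ ih₁ ih₂ =>
    calc halvingCost s.card * ({w | w ∈ r₁.matches'} ∪ {w | w ∈ r₂.matches'}).ncard
        ≤ halvingCost s.card *
            ({w | w ∈ r₁.matches'}.ncard + {w | w ∈ r₂.matches'}.ncard) :=
          Nat.mul_le_mul_left _ (Set.ncard_union_le _ _)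
      _ ≤ alen r₁ * s.card.factorial + alen r₂ * s.card.factorial := by
          rw [mul_add]
          exact add_le_add (ih₁ fun w hw => h (Or.inl hw)) (ih₂ fun w hw => h (Or.inr hw))
      _ = (alen r₁ + alen r₂) * s.card.factorial := (add_mul _ _ _).symm
  | comp r₁ r₂ ih₁ ih₂ =>
    rcases {w | w ∈ r₁.matches' * r₂.matches'}.eq_empty_or_nonempty with
      hempty | ⟨_, u, hu, v, hv, rfl⟩
    · change halvingCost s.card * {w | w ∈ r₁.matches' * r₂.matches'}.ncard ≤ _
      rw [hempty, Set.ncard_empty]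
      exact Nat.zero_le _
    · obtain ⟨s₁, s₂, rfl, h₁, h₂⟩ := exists_le_rearrangements_of_mul_le hu hv h
      exact halvingCost_mul_ncard_mul_le h₁ h₂ (ih₁ h₁) (ih₂ h₂)
  | star r _ =>
    obtain rfl : ↑([] : List α) = s := h (Language.nil_mem_kstar r.matches')
    simp [halvingCost_zero]

end LowerBound

section UpperBound

variable {α : Type*}

theorem mem_matches'_sum {l : List (RegularExpression α)} {w : List α} :
    w ∈ l.sum.matches' ↔ ∃ r ∈ l, w ∈ r.matches' := by
  induction l with
  | nil => simp [Language.notMem_zero]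
  | cons r l ih => simp [Language.mem_add, ih]

theorem alen_sum (l : List (RegularExpression α)) : alen l.sum = (l.map alen).sum := by
  induction l with
  | nil => rfl
  | cons r l ih => exact congrArg (alen r + ·) ih

variable [DecidableEq α] {S : Finset α} {n : ℕ}

theorem alen_halvingExpr (hS : S.card = n) : alen (halvingExpr n S) = halvingCost n := by
  induction n using Nat.strong_induction_on generalizing S with
  | _ n ih =>
    rcases n with _ | _ | n
    · rw [halvingExpr]; rfl
    · simp [halvingExpr, alen_sum, Function.comp_def, alen, hS, halvingCost_one]
    · have hterm (A) (hA : A ∈ S.powersetCard ((n + 2) / 2)) :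
          alen (halvingExpr ((n + 2) / 2) A * halvingExpr ((n + 2 + 1) / 2) (S \ A)) =
            halvingCost ((n + 2) / 2) + halvingCost ((n + 2 + 1) / 2) := by
        obtain ⟨hAS, hA⟩ := Finset.mem_powersetCard.1 hA
        have hcompl : (S \ A).card = (n + 2 + 1) / 2 := by
          rw [Finset.card_sdiff_of_subset hAS]; lia
        exact congrArg₂ (· + ·) (ih _ (by lia) hA) (ih _ (by lia) hcompl)
      rw [halvingExpr, alen_sum, List.map_map, Finset.sum_map_toList, halvingCost_add_two]
      simp only [Function.comp_apply]
      rw [Finset.sum_congr rfl hterm, Finset.sum_const, Finset.card_powersetCard, hS, smul_eq_mul]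

theorem matches'_halvingExpr (hS : S.card = n) :
    (halvingExpr n S).matches' = rearrangements S.val := by
  induction n using Nat.strong_induction_on generalizing S with
  | _ n ih =>
    ext w
    rcases n with _ | _ | n
    · obtain rfl := Finset.card_eq_zero.1 hS
      simp [halvingExpr, mem_rearrangements, Language.mem_one]
    · obtain ⟨a, rfl⟩ := Finset.card_eq_one.1 hS
      simp only [zero_add, halvingExpr, Finset.toList_singleton, List.map_cons, List.map_nil,
        List.sum_cons, List.sum_nil, RegularExpression.matches'_add,
        RegularExpression.matches'_char, RegularExpression.matches'_zero, add_zero,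
        mem_rearrangements, Finset.singleton_val, Multiset.coe_eq_singleton]
      exact Set.mem_singleton_iff
    · rw [halvingExpr, mem_matches'_sum,
        mem_rearrangements_iff_exists_powersetCard (k := (n + 2) / 2) (by lia)]
      simp only [List.mem_map, Finset.mem_toList, exists_exists_and_eq_and]
      refine exists_congr fun A => and_congr_right fun hA => ?_
      obtain ⟨hAS, hA⟩ := Finset.mem_powersetCard.1 hA
      have hcompl : (S \ A).card = (n + 2 + 1) / 2 := by
        rw [Finset.card_sdiff_of_subset hAS]; lia
      rw [RegularExpression.matches'_mul, ih _ (by lia) hA, ih _ (by lia) hcompl]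

end UpperBound

section Ell

variable {n k : ℕ}

theorem ell_le_alen {r : RegularExpression (Fin n)} (hr : r.matches' ≤ permLang n)
    (hk : k ≤ {w | w ∈ r.matches'}.ncard) : ell n k ≤ alen r :=
  Nat.sInf_le ⟨r, fun _ hw => hr hw, hk, rfl⟩

theorem exists_matches'_eq_permLang (n : ℕ) :
    ∃ r : RegularExpression (Fin n), r.matches' = permLang n ∧ alen r = halvingCost n :=
  ⟨halvingExpr n Finset.univ,
    (matches'_halvingExpr (Finset.card_fin n)).trans (permLang_eq_rearrangements n).symm,
    alen_halvingExpr (Finset.card_fin n)⟩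

theorem ncard_permLang (n : ℕ) : {w | w ∈ permLang n}.ncard = n.factorial := by
  rw [permLang_eq_rearrangements, ncard_rearrangements_of_nodup Finset.univ.nodup,
    Finset.card_val, Finset.card_fin]

theorem exists_alen_eq_ell (hk : k ≤ n.factorial) :
    ∃ r : RegularExpression (Fin n), r.matches' ≤ permLang n ∧
      k ≤ {w | w ∈ r.matches'}.ncard ∧ alen r = ell n k := by
  obtain ⟨r, hr, -⟩ := exists_matches'_eq_permLang n
  have hne : {m | ∃ r : RegularExpression (Fin n), (∀ w ∈ r.matches', w ∈ permLang n) ∧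
      k ≤ {w | w ∈ r.matches'}.ncard ∧ alen r = m}.Nonempty :=
    ⟨alen r, r, fun _ hw => hr ▸ hw, by rwa [hr, ncard_permLang], rfl⟩
  exact Nat.sInf_mem hne

theorem halvingCost_mul_le_ell_mul_factorial (hk : k ≤ n.factorial) :
    halvingCost n * k ≤ ell n k * n.factorial := by
  obtain ⟨r, hr, hkr, hlen⟩ := exists_alen_eq_ell hk
  rw [permLang_eq_rearrangements] at hr
  have hlower := halvingCost_mul_ncard_matches'_le r hr
  rw [Finset.card_val, Finset.card_fin, hlen] at hlower
  exact (Nat.mul_le_mul_left _ hkr).trans hlower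

theorem ell_factorial (n : ℕ) : ell n n.factorial = halvingCost n := by
  apply le_antisymm
  · obtain ⟨r, hr, hlen⟩ := exists_matches'_eq_permLang n
    exact (ell_le_alen hr.le (by rw [hr, ncard_permLang])).trans hlen.le
  · exact Nat.le_of_mul_le_mul_right (halvingCost_mul_le_ell_mul_factorial le_rfl)
      n.factorial_pos

end Ell

theorem stmt_18 (n k : ℕ) (hn : 1 ≤ n) (hk : 1 ≤ k) (hkn : k ≤ Nat.factorial n) :
    (ell n (Nat.factorial n) : ℝ) / (Nat.factorial n : ℝ) ≤ (ell n k : ℝ) / (k : ℝ) ∧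
    (f n : ℝ) / (Nat.factorial n : ℝ) ≤ (ell n (Nat.factorial n) : ℝ) / (Nat.factorial n : ℝ) := by
  rw [ell_factorial, ← halvingCost_eq_f hn]
  refine ⟨?_, le_rfl⟩
  rw [div_le_div_iff₀ (by positivity) (by positivity)]
  exact_mod_cast halvingCost_mul_le_ell_mul_factorial hkn
end
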